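/- Under the standing assumptions on the delayed system, for every η > 0 there exists exactly one continuous function x : [t₀−g, T] → ℝⁿ with x(s) = ν(s) for s ∈ [t₀−g, t₀] and x(t) = ν(t₀) + (1/Γ(β)) ∫_{t₀}^t (t−s)^{β−1} [A₀ x(s) + A₁ x(s−g(s)) + A₂ d(s) + f(s, x(s), x(s−g(s)), d(s))] ds for all t ∈ [t₀, T]; moreover, with y₀ defined by y₀ = ν on [t₀−g,t₀] and y₀ ≡ ν(t₀) on [t₀,T], this solution satisfies ϖ(x, y₀) ≤ ((a₀+a₁+η)/η) · M [ (a₀+a₁)‖ν‖ + a₂ ρ ] / Γ(β+1), where M = sup_{s∈[t₀,T]} ( (s−t₀)^β / E_β((a₀+a₁+η)(s−t₀)^β) ) and ϖ is the weighted generalized metric with weight h(s) = 1 on [t₀−g,t₀], h(s) = E_β((a₀+a₁+η)(s−t₀)^β) on [t₀,T]. -/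

import Mathlib

open Set ENNReal MeasureTheory intervalIntegral

/-- Euclidean `ℝⁿ`. -/
abbrev Euc (n : ℕ) := EuclideanSpace ℝ (Fin n)

/-- The Mittag-Leffler function `E_β(t) = Σ_{b ≥ 0} t^b / Γ(bβ + 1)`. -/
noncomputable def mittagLeffler (β t : ℝ) : ℝ :=
  ∑' b : ℕ, t ^ b / Real.Gamma (b * β + 1)

/-- The weight function: `h(s) = 1` for `s ≤ t₀` and `h(s) = E_β(θ (s − t₀)^β)` for `s ≥ t₀`. -/
noncomputable def weight (β t₀ θ : ℝ) (s : ℝ) : ℝ :=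
  if s ≤ t₀ then 1 else mittagLeffler β (θ * (s - t₀) ^ β)

/-- The weighted generalized metric
`ϖ(x₁, x₂) = inf { b ∈ [0, ∞] : ‖x₁(t) − x₂(t)‖ ≤ b h(t) for all t ∈ [t₀ − g, T] }`. -/
noncomputable def genDist {n : ℕ} (β t₀ T g θ : ℝ) (x₁ x₂ : ℝ → Euc n) : ℝ≥0∞ :=
  sInf {b : ℝ≥0∞ | ∀ t ∈ Icc (t₀ - g) T,
    (‖x₁ t - x₂ t‖₊ : ℝ≥0∞) ≤ b * ENNReal.ofReal (weight β t₀ θ t)}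

/-- The integral operator `𝒱`:
`(𝒱 y)(t) = ν(t)` on `[t₀ − g, t₀]` and
`(𝒱 y)(t) = ν(t₀) + (1/Γ(β)) ∫_{t₀}^t (t−s)^{β−1} [A₀ y(s) + A₁ y(s−g(s)) + A₂ d(s)
  + f(s, y(s), y(s−g(s)), d(s))] ds` on `[t₀, T]`. -/
noncomputable def Vop {n p : ℕ} (β t₀ : ℝ)
    (A₀ A₁ : Euc n →L[ℝ] Euc n) (A₂ : Euc p →L[ℝ] Euc n)
    (f : ℝ → Euc n → Euc n → Euc p → Euc n) (d : ℝ → Euc p) (gdel : ℝ → ℝ)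
    (ν : ℝ → Euc n) (y : ℝ → Euc n) : ℝ → Euc n :=
  fun t =>
    if t ≤ t₀ then ν t
    else ν t₀ + (Real.Gamma β)⁻¹ •
      ∫ s in t₀..t, ((t - s) ^ (β - 1)) •
        (A₀ (y s) + A₁ (y (s - gdel s)) + A₂ (d s) + f s (y s) (y (s - gdel s)) (d s))

/-- Banach's fixed point theorem for an operator on functions that are continuous on `[a, b]`,
contracting for the supremum distance weighted by `h`. -/
theorem exists_unique_fixedPoint_of_weighted_contraction {E : Type*} [NormedAddCommGroup E]
    [NormedSpace ℝ E] [CompleteSpace E] {a b L : ℝ} (hab : a ≤ b) (hL0 : 0 ≤ L) (hL1 : L < 1)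
    {h : ℝ → ℝ} (hh : Continuous h) (hpos : ∀ t, 0 < h t) (W : (ℝ → E) → ℝ → E)
    (hW : ∀ y, ContinuousOn y (Icc a b) → ContinuousOn (W y) (Icc a b))
    (hWL : ∀ y₁ y₂, ContinuousOn y₁ (Icc a b) → ContinuousOn y₂ (Icc a b) → ∀ c, 0 ≤ c →
      (∀ t ∈ Icc a b, ‖y₁ t - y₂ t‖ ≤ c * h t) →
      ∀ t ∈ Icc a b, ‖W y₁ t - W y₂ t‖ ≤ L * c * h t) :
    ∃ x : ℝ → E, ContinuousOn x (Icc a b) ∧ (∀ t ∈ Icc a b, x t = W x t) ∧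
      (∀ y, ContinuousOn y (Icc a b) → ∀ c, 0 ≤ c →
        (∀ t ∈ Icc a b, ‖y t - W y t‖ ≤ c * h t) →
        ∀ t ∈ Icc a b, ‖x t - y t‖ ≤ c / (1 - L) * h t) ∧
      ∀ y, ContinuousOn y (Icc a b) → (∀ t ∈ Icc a b, y t = W y t) →
        ∀ t ∈ Icc a b, y t = x t := by
  let ext (z : C(Icc a b, E)) : ℝ → E := fun t => h t • IccExtend hab z t
  have hext (z) : ContinuousOn (ext z) (Icc a b) :=
    (hh.smul z.continuous.Icc_extend').continuousOn
  let scale (y : ℝ → E) (hy : ContinuousOn y (Icc a b)) : C(Icc a b, E) :=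
    ⟨fun t => (h t)⁻¹ • y t, (Continuous.inv₀ (f := fun t : Icc a b => h t) (by fun_prop)
      fun t => (hpos t).ne').smul
      (continuousOn_iff_continuous_domRestrict.1 hy)⟩
  have ext_scale (y hy) : ∀ t ∈ Icc a b, ext (scale y hy) t = y t := by
    intro t ht
    simp only [ext, scale, IccExtend_of_mem hab _ ht, ContinuousMap.coe_mk]
    rw [smul_inv_smul₀ (hpos t).ne']
  have norm_ext (z₁ z₂ : C(Icc a b, E)) : ∀ t ∈ Icc a b,
      ‖ext z₁ t - ext z₂ t‖ ≤ dist z₁ z₂ * h t := by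
    intro t ht
    simp only [ext, IccExtend_of_mem hab _ ht]
    rw [← smul_sub, norm_smul, Real.norm_of_nonneg (hpos t).le, mul_comm, ← dist_eq_norm]
    exact mul_le_mul_of_nonneg_right (ContinuousMap.dist_apply_le_dist _) (hpos t).le
  have dist_scale (y₁ hy₁ y₂ hy₂) (c : ℝ) (hc : 0 ≤ c)
      (H : ∀ t ∈ Icc a b, ‖y₁ t - y₂ t‖ ≤ c * h t) :
      dist (scale y₁ hy₁) (scale y₂ hy₂) ≤ c := by
    rw [ContinuousMap.dist_le hc]
    intro t
    simp only [scale, ContinuousMap.coe_mk, dist_eq_norm]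
    rw [← smul_sub, norm_smul, norm_inv, Real.norm_of_nonneg (hpos t).le, inv_mul_le_iff₀ (hpos t),
      mul_comm]
    exact H t t.2
  let Ψ (z : C(Icc a b, E)) : C(Icc a b, E) := scale (W (ext z)) (hW _ (hext z))
  have hΨ : ContractingWith ⟨L, hL0⟩ Ψ := by
    refine ⟨by exact_mod_cast hL1, LipschitzWith.of_dist_le_mul fun z₁ z₂ => ?_⟩
    exact dist_scale _ (hW _ (hext _)) _ (hW _ (hext _)) _ (mul_nonneg hL0 dist_nonneg)
      (hWL _ _ (hext _) (hext _) _ dist_nonneg (norm_ext _ _))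
  have W_congr (y₁ y₂) (hy₁ : ContinuousOn y₁ (Icc a b)) (hy₂ : ContinuousOn y₂ (Icc a b))
      (H : ∀ t ∈ Icc a b, y₁ t = y₂ t) : ∀ t ∈ Icc a b, W y₁ t = W y₂ t := by
    intro t ht
    have := hWL y₁ y₂ hy₁ hy₂ 0 le_rfl (fun t ht => by simp [H t ht]) t ht
    rw [mul_zero, zero_mul] at this
    exact sub_eq_zero.1 (norm_le_zero_iff.1 this)
  have : Nonempty (Icc a b) := ⟨⟨a, left_mem_Icc.2 hab⟩⟩
  have hfix := hΨ.fixedPoint_isFixedPt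
  set z := ContractingWith.fixedPoint Ψ hΨ
  refine ⟨ext z, hext z, ?_, ?_, ?_⟩
  · intro t ht
    conv_lhs => rw [← hfix.eq]
    exact ext_scale _ (hW _ (hext z)) t ht
  · intro y hy c hc H t ht
    have h1 : dist (scale y hy) (Ψ (scale y hy)) ≤ c :=
      dist_scale _ hy _ (hW _ (hext _)) _ hc fun s hs => by
        rw [W_congr _ y (hext _) hy (ext_scale y hy) s hs]
        exact H s hs
    have h2 := hΨ.dist_fixedPoint_le (scale y hy)
    have h3 := norm_ext z (scale y hy) t ht
    rw [ext_scale y hy t ht, dist_comm] at h3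
    refine h3.trans (mul_le_mul_of_nonneg_right (h2.trans ?_) (hpos t).le)
    exact div_le_div_of_nonneg_right h1 (sub_nonneg.2 hL1.le)
  · intro y hy H t ht
    have h1 : Function.IsFixedPt Ψ (scale y hy) := by
      ext s
      simp only [Ψ, scale, ContinuousMap.coe_mk]
      rw [W_congr _ y (hext _) hy (ext_scale y hy) s s.2, ← H s s.2]
    rw [← ext_scale y hy t ht, hΨ.fixedPoint_unique h1]

theorem Gamma_mul_add_one_pos {β : ℝ} (hβ : 0 ≤ β) (b : ℕ) : 0 < Real.Gamma (b * β + 1) :=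
  Real.Gamma_pos_of_pos (by positivity)

theorem Gamma_div_Gamma_add_le {x β : ℝ} (hx : 0 < x) (hβ0 : 0 < β) (hβ1 : β < 1) :
    Real.Gamma x / Real.Gamma (x + β) ≤ (x + β) ^ (1 - β) / x := by
  have hxβ : 0 < x + β := by positivity
  have hG := Real.Gamma_pos_of_pos hxβ
  have h := Real.Gamma_mul_add_mul_le_rpow_Gamma_mul_rpow_Gamma hxβ (by positivity : 0 < x + β + 1)
    hβ0 (sub_pos.2 hβ1) (by ring)
  rw [show β * (x + β) + (1 - β) * (x + β + 1) = x + 1 by ring, Real.Gamma_add_one hx.ne',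
    Real.Gamma_add_one hxβ.ne', Real.mul_rpow hxβ.le hG.le] at h
  have h2 : Real.Gamma (x + β) ^ β * Real.Gamma (x + β) ^ (1 - β) = Real.Gamma (x + β) := by
    rw [← Real.rpow_add hG]; simp
  rw [div_le_div_iff₀ hG hx]
  calc Real.Gamma x * x = x * Real.Gamma x := mul_comm _ _
    _ ≤ _ := h
    _ = (x + β) ^ (1 - β) *
        (Real.Gamma (x + β) ^ β * Real.Gamma (x + β) ^ (1 - β)) := by ring
    _ = _ := by rw [h2]

open Filter Topology in
theorem tendsto_Gamma_div_Gamma_add {β : ℝ} (hβ0 : 0 < β) (hβ1 : β < 1) :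
    Tendsto (fun x => Real.Gamma x / Real.Gamma (x + β)) atTop (𝓝 0) := by
  have hlim : Tendsto (fun x : ℝ => 2 ^ (1 - β) * x ^ (-β)) atTop (𝓝 0) := by
    simpa using (tendsto_rpow_neg_atTop hβ0).const_mul ((2 : ℝ) ^ (1 - β))
  refine squeeze_zero' ?_ ?_ hlim
  · filter_upwards [eventually_gt_atTop 0] with x hx
    exact div_nonneg (Real.Gamma_pos_of_pos hx).le (Real.Gamma_pos_of_pos (by positivity)).le
  · filter_upwards [eventually_ge_atTop 1] with x hx
    have hx0 : 0 < x := by linarith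
    refine (Gamma_div_Gamma_add_le hx0 hβ0 hβ1).trans ?_
    have : (x + β) ^ (1 - β) ≤ (2 * x) ^ (1 - β) :=
      Real.rpow_le_rpow (by positivity) (by linarith) (by linarith)
    rw [Real.mul_rpow (by norm_num) hx0.le] at this
    rw [div_le_iff₀ hx0, mul_assoc, ← Real.rpow_add_one hx0.ne', neg_add_eq_sub]
    exact this

open Filter Topology in
theorem summable_mittagLeffler {β : ℝ} (hβ0 : 0 < β) (hβ1 : β < 1) (t : ℝ) :
    Summable fun b : ℕ => t ^ b / Real.Gamma (b * β + 1) := by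
  rcases eq_or_ne t 0 with rfl | ht
  · refine summable_of_ne_finset_zero (s := {0}) fun b hb => ?_
    simp [zero_pow (Finset.notMem_singleton.1 hb)]
  refine summable_of_ratio_test_tendsto_lt_one (l := 0) zero_lt_one
    (Eventually.of_forall fun b =>
      div_ne_zero (pow_ne_zero _ ht) (Gamma_mul_add_one_pos hβ0.le b).ne') ?_
  have h1 : Tendsto (fun b : ℕ => (b : ℝ) * β + 1) atTop atTop :=
    tendsto_atTop_add_const_right _ _ (tendsto_natCast_atTop_atTop.atTop_mul_const hβ0)
  have h2 := ((tendsto_Gamma_div_Gamma_add hβ0 hβ1).comp h1).const_mul |t|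
  rw [mul_zero] at h2
  refine h2.congr fun b => ?_
  have hb := Gamma_mul_add_one_pos hβ0.le b
  have hb' := Gamma_mul_add_one_pos hβ0.le (b + 1)
  have he : (b : ℝ) * β + 1 + β = ((b + 1 : ℕ) : ℝ) * β + 1 := by push_cast; ring
  simp only [Function.comp, he, norm_div, norm_pow, Real.norm_eq_abs, abs_of_pos hb,
    abs_of_pos hb']
  have := abs_pos.2 ht
  field_simp
  ring

theorem mittagLeffler_zero (β : ℝ) : mittagLeffler β 0 = 1 := by
  rw [mittagLeffler, tsum_eq_single 0 fun b hb => by simp [hb]]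
  simp

theorem mittagLeffler_mono {β s t : ℝ} (hβ0 : 0 < β) (hβ1 : β < 1) (hs : 0 ≤ s) (hst : s ≤ t) :
    mittagLeffler β s ≤ mittagLeffler β t :=
  (summable_mittagLeffler hβ0 hβ1 s).tsum_le_tsum
    (fun b => div_le_div_of_nonneg_right (pow_le_pow_left₀ hs hst b)
      (Gamma_mul_add_one_pos hβ0.le b).le) (summable_mittagLeffler hβ0 hβ1 t)

theorem continuous_mittagLeffler {β : ℝ} (hβ0 : 0 < β) (hβ1 : β < 1) :
    Continuous (mittagLeffler β) := by
  rw [continuous_iff_continuousAt]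
  intro t
  have h : ContinuousOn (mittagLeffler β) (Metric.closedBall 0 (|t| + 1)) := by
    refine continuousOn_tsum (fun b => by fun_prop) (summable_mittagLeffler hβ0 hβ1 (|t| + 1)) ?_
    intro b x hx
    rw [mem_closedBall_zero_iff] at hx
    rw [norm_div, norm_pow, Real.norm_of_nonneg (Gamma_mul_add_one_pos hβ0.le b).le]
    exact div_le_div_of_nonneg_right (pow_le_pow_left₀ (norm_nonneg _) hx b)
      (Gamma_mul_add_one_pos hβ0.le b).le
  exact h.continuousAt (Metric.closedBall_mem_nhds_of_mem (by simp))

theorem weight_eq {β : ℝ} (hβ0 : 0 < β) (t₀ θ s : ℝ) :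
    weight β t₀ θ s = mittagLeffler β (θ * (max (s - t₀) 0) ^ β) := by
  unfold weight
  split_ifs with h
  · rw [max_eq_right (by linarith), Real.zero_rpow hβ0.ne', mul_zero, mittagLeffler_zero]
  · rw [max_eq_left (by linarith)]

theorem weight_of_le {β t₀ s : ℝ} (hβ0 : 0 < β) (θ : ℝ) (hs : t₀ ≤ s) :
    weight β t₀ θ s = mittagLeffler β (θ * (s - t₀) ^ β) := by
  rw [weight_eq hβ0, max_eq_left (by linarith)]

theorem continuous_weight {β : ℝ} (hβ0 : 0 < β) (hβ1 : β < 1) (t₀ θ : ℝ) :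
    Continuous (weight β t₀ θ) := by
  rw [funext (weight_eq hβ0 t₀ θ)]
  exact (continuous_mittagLeffler hβ0 hβ1).comp (continuous_const.mul
    (((continuous_id.sub continuous_const).max continuous_const).rpow_const
      fun _ => Or.inr hβ0.le))

theorem monotone_weight {β θ : ℝ} (hβ0 : 0 < β) (hβ1 : β < 1) (t₀ : ℝ) (hθ : 0 ≤ θ) :
    Monotone (weight β t₀ θ) := by
  intro s t hst
  rw [weight_eq hβ0, weight_eq hβ0]
  refine mittagLeffler_mono hβ0 hβ1 (by positivity) (mul_le_mul_of_nonneg_left ?_ hθ)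
  exact Real.rpow_le_rpow (le_max_right _ _) (max_le_max (by linarith) le_rfl) hβ0.le

theorem one_le_weight {β θ : ℝ} (hβ0 : 0 < β) (hβ1 : β < 1) (t₀ : ℝ) (hθ : 0 ≤ θ) (s : ℝ) :
    1 ≤ weight β t₀ θ s := by
  rw [weight_eq hβ0, ← mittagLeffler_zero β]
  exact mittagLeffler_mono hβ0 hβ1 le_rfl (by positivity)

theorem integral_one_sub_rpow_mul_rpow {α β : ℝ} (hα : 0 ≤ α) (hβ : 0 < β) :
    ∫ u in (0 : ℝ)..1, (1 - u) ^ (β - 1) * u ^ α =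
      Real.Gamma (α + 1) * Real.Gamma β / Real.Gamma (α + 1 + β) := by
  have h := ProbabilityTheory.beta_eq_betaIntegralReal (α + 1) β (by positivity) hβ
  rw [ProbabilityTheory.beta] at h
  rw [h, Complex.betaIntegral]
  have : ∫ x in (0 : ℝ)..1, (x : ℂ) ^ (((α + 1 : ℝ) : ℂ) - 1) * (1 - (x : ℂ)) ^ ((β : ℂ) - 1) =
      ∫ x in (0 : ℝ)..1, (((1 - x) ^ (β - 1) * x ^ α : ℝ) : ℂ) := by
    refine integral_congr fun x hx => ?_
    rw [uIcc_of_le zero_le_one] at hx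
    have h1 : ((α + 1 : ℝ) : ℂ) - 1 = (α : ℂ) := by push_cast; ring
    simp only [h1]
    rw [Complex.ofReal_mul, Complex.ofReal_cpow (sub_nonneg.2 hx.2), Complex.ofReal_cpow hx.1]
    push_cast
    ring
  rw [this, intervalIntegral.integral_ofReal, Complex.ofReal_re]

theorem intervalIntegrable_sub_rpow {β : ℝ} (hβ : 0 < β) (a t : ℝ) :
    IntervalIntegrable (fun s => (t - s) ^ (β - 1)) volume a t := by
  have h := (intervalIntegrable_rpow' (a := t - a) (b := t - t)
    (show -1 < β - 1 by linarith)).comp_sub_left t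
  simpa using h

theorem integral_sub_rpow_eq {β : ℝ} (hβ : 0 < β) (a t : ℝ) :
    ∫ s in a..t, (t - s) ^ (β - 1) = (t - a) ^ β / β := by
  rw [intervalIntegral.integral_comp_sub_left (fun x => x ^ (β - 1)) t, sub_self,
    integral_rpow (Or.inl (by linarith)), sub_add_cancel, Real.zero_rpow hβ.ne', sub_zero]

theorem integral_sub_rpow_smul_eq {E : Type*} [NormedAddCommGroup E] [NormedSpace ℝ E]
    {β a t : ℝ} (hβ : 0 < β) (hat : a ≤ t) (F : ℝ → E) :
    ∫ s in a..t, (t - s) ^ (β - 1) • F s =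
      (t - a) ^ β • ∫ u in (0 : ℝ)..1, (1 - u) ^ (β - 1) • F (a + (t - a) * u) := by
  rcases hat.eq_or_lt with rfl | hat
  · simp [Real.zero_rpow hβ.ne']
  have hc : 0 < t - a := sub_pos.2 hat
  have h := intervalIntegral.smul_integral_comp_add_mul (a := 0) (b := 1)
    (fun s => (t - s) ^ (β - 1) • F s) (t - a) a
  rw [mul_zero, mul_one, add_zero, add_sub_cancel] at h
  rw [← h, show (t - a) ^ β = (t - a) * (t - a) ^ (β - 1) by
    rw [mul_comm, ← Real.rpow_add_one hc.ne', sub_add_cancel], mul_smul,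
    ← intervalIntegral.integral_smul ((t - a) ^ (β - 1))]
  congr 1
  refine integral_congr fun u hu => ?_
  rw [uIcc_of_le zero_le_one] at hu
  rw [show t - (a + (t - a) * u) = (t - a) * (1 - u) by ring,
    Real.mul_rpow hc.le (sub_nonneg.2 hu.2), mul_smul]

theorem continuousOn_integral_sub_rpow_smul {E : Type*} [NormedAddCommGroup E] [NormedSpace ℝ E]
    {β a T : ℝ} (hβ : 0 < β) (haT : a ≤ T) {F : ℝ → E} (hF : ContinuousOn F (Icc a T)) :
    ContinuousOn (fun t => ∫ s in a..t, (t - s) ^ (β - 1) • F s) (Icc a T) := by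
  obtain ⟨C, hC⟩ := isCompact_Icc.exists_bound_of_continuousOn hF
  let G : ℝ → E := IccExtend haT ((Icc a T).domRestrict F)
  have hG : Continuous G := (continuousOn_iff_continuous_domRestrict.1 hF).Icc_extend'
  have hGC (s) : ‖G s‖ ≤ C := hC _ (projIcc a T haT s).2
  have hcont : Continuous fun t =>
      (t - a) ^ β • ∫ u in (0 : ℝ)..1, (1 - u) ^ (β - 1) • G (a + (t - a) * u) := by
    refine ((continuous_id.sub continuous_const).rpow_const fun _ => Or.inr hβ.le).smul ?_
    refine continuous_of_dominated_interval (bound := fun u => ‖(1 - u) ^ (β - 1)‖ * C)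
      (fun t => ?_) (fun t => ?_) ?_ ?_
    · exact (intervalIntegrable_sub_rpow hβ 0 1).def'.aestronglyMeasurable.smul
        (by fun_prop : Continuous fun u => G (a + (t - a) * u)).aestronglyMeasurable
    · refine Filter.Eventually.of_forall fun u _ => ?_
      rw [norm_smul]
      exact mul_le_mul_of_nonneg_left (hGC _) (norm_nonneg _)
    · exact (intervalIntegrable_sub_rpow hβ 0 1).norm.mul_const C
    · exact Filter.Eventually.of_forall fun u _ => by fun_prop
  refine hcont.continuousOn.congr fun t ht => ?_
  refine Eq.trans ?_ (integral_sub_rpow_smul_eq hβ ht.1 G)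
  refine integral_congr fun s hs => ?_
  rw [uIcc_of_le ht.1] at hs
  simp only [G]
  rw [IccExtend_of_mem haT _ ⟨hs.1, hs.2.trans ht.2⟩, domRestrict_apply]

theorem integral_one_sub_rpow_mul_mittagLeffler {β c : ℝ} (hβ0 : 0 < β) (hβ1 : β < 1)
    (hc : 0 ≤ c) :
    c * ∫ u in (0 : ℝ)..1, (1 - u) ^ (β - 1) * mittagLeffler β (c * u ^ β) =
      Real.Gamma β * (mittagLeffler β c - 1) := by
  have hsum : HasSum (fun b : ℕ => ∫ u in (0 : ℝ)..1,
        (1 - u) ^ (β - 1) * ((c * u ^ β) ^ b / Real.Gamma (b * β + 1)))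
      (∫ u in (0 : ℝ)..1, (1 - u) ^ (β - 1) * mittagLeffler β (c * u ^ β)) := by
    refine intervalIntegral.hasSum_integral_of_dominated_convergence
      (fun b u => ‖(1 - u) ^ (β - 1)‖ * (c ^ b / Real.Gamma (b * β + 1))) (fun b => ?_)
      (fun b => Filter.Eventually.of_forall fun u hu => ?_)
      (Filter.Eventually.of_forall fun u _ => (summable_mittagLeffler hβ0 hβ1 c).mul_left _) ?_
      (Filter.Eventually.of_forall fun u _ =>
        (summable_mittagLeffler hβ0 hβ1 _).hasSum.mul_left _)
    · refine (intervalIntegrable_sub_rpow hβ0 0 1).def'.aestronglyMeasurable.mul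
        (Continuous.aestronglyMeasurable ?_)
      exact ((continuous_const.mul (continuous_id.rpow_const
        fun _ => Or.inr hβ0.le)).pow b).div_const _
    · rw [uIoc_of_le zero_le_one] at hu
      have hu0 : 0 ≤ u := hu.1.le
      have hΓ := Gamma_mul_add_one_pos hβ0.le b
      rw [norm_mul, Real.norm_of_nonneg (r := _ / _) (by positivity)]
      gcongr
      exact mul_le_of_le_one_right hc (Real.rpow_le_one hu0 hu.2 hβ0.le)
    · simp_rw [tsum_mul_left]
      exact (intervalIntegrable_sub_rpow hβ0 0 1).norm.mul_const _
  have hterm (b : ℕ) : c * ∫ u in (0 : ℝ)..1,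
      (1 - u) ^ (β - 1) * ((c * u ^ β) ^ b / Real.Gamma (b * β + 1)) =
      Real.Gamma β * (c ^ (b + 1) / Real.Gamma ((b + 1 : ℕ) * β + 1)) := by
    have hΓ := Gamma_mul_add_one_pos hβ0.le b
    have : ∫ u in (0 : ℝ)..1, (1 - u) ^ (β - 1) * ((c * u ^ β) ^ b / Real.Gamma (b * β + 1)) =
        ∫ u in (0 : ℝ)..1, (c ^ b / Real.Gamma (b * β + 1)) *
          ((1 - u) ^ (β - 1) * u ^ (b * β)) := by
      refine integral_congr fun u hu => ?_
      rw [uIcc_of_le zero_le_one] at hu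
      rw [mul_pow, ← Real.rpow_mul_natCast hu.1, mul_comm β]
      ring
    rw [this, intervalIntegral.integral_const_mul,
      integral_one_sub_rpow_mul_rpow (by positivity) hβ0,
      show (b : ℝ) * β + 1 + β = (b + 1 : ℕ) * β + 1 by push_cast; ring]
    field_simp
    ring
  have h1 := (hsum.mul_left c).unique
    (((((hasSum_nat_add_iff' 1).2
      (summable_mittagLeffler hβ0 hβ1 c).hasSum).mul_left (Real.Gamma β))).congr_fun hterm)
  rw [h1]
  simp [mittagLeffler]

theorem integral_sub_rpow_mul_weight_le {β t₀ θ t : ℝ} (hβ0 : 0 < β) (hβ1 : β < 1) (hθ : 0 < θ)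
    (ht : t₀ ≤ t) :
    ∫ s in t₀..t, (t - s) ^ (β - 1) * weight β t₀ θ s ≤
      Real.Gamma β * weight β t₀ θ t / θ := by
  have hc : 0 ≤ t - t₀ := sub_nonneg.2 ht
  have h1 := integral_sub_rpow_smul_eq hβ0 ht (weight β t₀ θ)
  simp only [smul_eq_mul] at h1
  have h2 : ∫ u in (0 : ℝ)..1, (1 - u) ^ (β - 1) * weight β t₀ θ (t₀ + (t - t₀) * u) =
      ∫ u in (0 : ℝ)..1,
        (1 - u) ^ (β - 1) * mittagLeffler β (θ * (t - t₀) ^ β * u ^ β) := by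
    refine integral_congr fun u hu => ?_
    rw [uIcc_of_le zero_le_one] at hu
    rw [weight_of_le hβ0 θ (by nlinarith [hu.1]), add_sub_cancel_left, Real.mul_rpow hc hu.1,
      mul_assoc]
  have h3 := integral_one_sub_rpow_mul_mittagLeffler hβ0 hβ1
    (mul_nonneg hθ.le (Real.rpow_nonneg hc β))
  rw [h1, h2, le_div_iff₀ hθ, mul_comm, ← mul_assoc, h3, weight_of_le hβ0 θ ht]
  exact mul_le_mul_of_nonneg_left (by linarith) (Real.Gamma_pos_of_pos hβ0).le

theorem norm_integral_sub_rpow_smul_le {E : Type*} [NormedAddCommGroup E] [NormedSpace ℝ E]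
    {β a t : ℝ} (hβ : 0 < β) (hat : a ≤ t) {F : ℝ → E} {φ : ℝ → ℝ} (hφ : Continuous φ)
    (hF : ∀ s ∈ Icc a t, ‖F s‖ ≤ φ s) :
    ‖∫ s in a..t, (t - s) ^ (β - 1) • F s‖ ≤ ∫ s in a..t, (t - s) ^ (β - 1) * φ s := by
  refine intervalIntegral.norm_integral_le_of_norm_le hat (Filter.Eventually.of_forall ?_)
    ((intervalIntegrable_sub_rpow hβ a t).mul_continuousOn hφ.continuousOn)
  intro s hs
  have hk := Real.rpow_nonneg (sub_nonneg.2 hs.2) (β - 1)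
  rw [norm_smul, Real.norm_of_nonneg hk]
  exact mul_le_mul_of_nonneg_left (hF s ⟨hs.1.le, hs.2⟩) hk

/-- The Volterra operator with kernel `(t - s)^(β - 1) / Γ(β)` and initial function `ν`. -/
noncomputable def fracVolterra {E : Type*} [NormedAddCommGroup E] [NormedSpace ℝ E]
    (β t₀ : ℝ) (ν F : ℝ → E) (t : ℝ) : E :=
  ν (min t t₀) + (Real.Gamma β)⁻¹ •
    ∫ s in t₀..max t t₀, (max t t₀ - s) ^ (β - 1) • F s

section fracVolterra

variable {E : Type*} [NormedAddCommGroup E] [NormedSpace ℝ E] {β t₀ T g θ : ℝ} {ν F : ℝ → E}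

theorem fracVolterra_of_le {t : ℝ} (ht : t ≤ t₀) : fracVolterra β t₀ ν F t = ν t := by
  simp [fracVolterra, ht]

theorem fracVolterra_of_ge {t : ℝ} (ht : t₀ ≤ t) :
    fracVolterra β t₀ ν F t =
      ν t₀ + (Real.Gamma β)⁻¹ • ∫ s in t₀..t, (t - s) ^ (β - 1) • F s := by
  simp [fracVolterra, ht]

theorem continuousOn_fracVolterra (hβ : 0 < β) (hg : 0 ≤ g) (hT : t₀ ≤ T)
    (hν : ContinuousOn ν (Icc (t₀ - g) t₀)) (hF : ContinuousOn F (Icc t₀ T)) :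
    ContinuousOn (fracVolterra β t₀ ν F) (Icc (t₀ - g) T) := by
  refine ContinuousOn.add (hν.comp (by fun_prop) fun t ht => ?_) (ContinuousOn.const_smul ?_ _)
  · exact ⟨le_min ht.1 (by linarith), min_le_right _ _⟩
  · exact (continuousOn_integral_sub_rpow_smul hβ hT hF).comp
      (by fun_prop : ContinuousOn (fun t => max t t₀) _)
      fun t ht => ⟨le_max_right _ _, max_le ht.2 hT⟩

theorem norm_fracVolterra_sub_le_weight (hβ0 : 0 < β) (hβ1 : β < 1) (hθ : 0 < θ) {F₁ F₂ : ℝ → E}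
    (hF₁ : ContinuousOn F₁ (Icc t₀ T)) (hF₂ : ContinuousOn F₂ (Icc t₀ T)) {c : ℝ} (hc : 0 ≤ c)
    (h : ∀ s ∈ Icc t₀ T, ‖F₁ s - F₂ s‖ ≤ c * weight β t₀ θ s) {t : ℝ} (ht : t ≤ T) :
    ‖fracVolterra β t₀ ν F₁ t - fracVolterra β t₀ ν F₂ t‖ ≤ c / θ * weight β t₀ θ t := by
  have hΓ := Real.Gamma_pos_of_pos hβ0
  rcases le_total t t₀ with ht0 | ht0
  · rw [fracVolterra_of_le ht0, fracVolterra_of_le ht0, sub_self, norm_zero]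
    have := one_le_weight hβ0 hβ1 t₀ hθ.le t
    positivity
  have hint (F : ℝ → E) (hF : ContinuousOn F (Icc t₀ T)) :
      IntervalIntegrable (fun s => (t - s) ^ (β - 1) • F s) volume t₀ t := by
    refine (intervalIntegrable_sub_rpow hβ0 t₀ t).smul_continuousOn (hF.mono ?_)
    rw [uIcc_of_le ht0]
    exact Icc_subset_Icc_right ht
  rw [fracVolterra_of_ge ht0, fracVolterra_of_ge ht0, add_sub_add_left_eq_sub, ← smul_sub,
    ← intervalIntegral.integral_sub (hint F₁ hF₁) (hint F₂ hF₂), norm_smul, norm_inv,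
    Real.norm_of_nonneg hΓ.le, inv_mul_le_iff₀ hΓ]
  simp_rw [← smul_sub]
  refine (norm_integral_sub_rpow_smul_le hβ0 ht0 (φ := fun s => c * weight β t₀ θ s)
    (continuous_const.mul (continuous_weight hβ0 hβ1 t₀ θ))
    fun s hs => h s ⟨hs.1, hs.2.trans ht⟩).trans ?_
  rw [integral_congr fun s _ => mul_left_comm ((t - s) ^ (β - 1)) c (weight β t₀ θ s),
    intervalIntegral.integral_const_mul]
  refine (mul_le_mul_of_nonneg_left (integral_sub_rpow_mul_weight_le hβ0 hβ1 hθ ht0) hc).trans_eq ?_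
  ring

theorem norm_sub_fracVolterra_le (hβ : 0 < β) {B : ℝ} {t : ℝ} (ht : t₀ ≤ t)
    (hB : ∀ s ∈ Icc t₀ t, ‖F s‖ ≤ B) :
    ‖ν t₀ - fracVolterra β t₀ ν F t‖ ≤ (t - t₀) ^ β * B / Real.Gamma (β + 1) := by
  have hΓ := Real.Gamma_pos_of_pos hβ
  rw [fracVolterra_of_ge ht, sub_add_cancel_left, norm_neg, norm_smul, norm_inv,
    Real.norm_of_nonneg hΓ.le, inv_mul_le_iff₀ hΓ]
  refine (norm_integral_sub_rpow_smul_le hβ ht continuous_const hB).trans_eq ?_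
  rw [intervalIntegral.integral_mul_const, integral_sub_rpow_eq hβ, Real.Gamma_add_one hβ.ne']
  field_simp

end fracVolterra

theorem norm_affine_sub_le {X Y Z : Type*} [NormedAddCommGroup X] [NormedSpace ℝ X]
    [NormedAddCommGroup Y] [NormedSpace ℝ Y] [NormedAddCommGroup Z] [NormedSpace ℝ Z]
    (A₀ A₁ : X →L[ℝ] Z) (A₂ : Y →L[ℝ] Z) {k a₀ a₁ a₂ : ℝ} (h₀ : ‖A₀‖ + k ≤ a₀)
    (h₁ : ‖A₁‖ + k ≤ a₁) (h₂ : ‖A₂‖ + k ≤ a₂) {u v u' v' : X} {w w' : Y} {φ φ' : Z}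
    (hφ : ‖φ - φ'‖ ≤ k * (‖u - u'‖ + ‖v - v'‖ + ‖w - w'‖)) :
    ‖(A₀ u + A₁ v + A₂ w + φ) - (A₀ u' + A₁ v' + A₂ w' + φ')‖ ≤
      a₀ * ‖u - u'‖ + a₁ * ‖v - v'‖ + a₂ * ‖w - w'‖ := by
  have e : (A₀ u + A₁ v + A₂ w + φ) - (A₀ u' + A₁ v' + A₂ w' + φ') =
      A₀ (u - u') + A₁ (v - v') + A₂ (w - w') + (φ - φ') := by
    simp only [map_sub]; abel
  rw [e]
  have n₀ := A₀.le_opNorm (u - u')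
  have n₁ := A₁.le_opNorm (v - v')
  have n₂ := A₂.le_opNorm (w - w')
  have m₀ := mul_le_mul_of_nonneg_right h₀ (norm_nonneg (u - u'))
  have m₁ := mul_le_mul_of_nonneg_right h₁ (norm_nonneg (v - v'))
  have m₂ := mul_le_mul_of_nonneg_right h₂ (norm_nonneg (w - w'))
  refine norm_add₄_le.trans ?_
  linarith

/-- Under the standing assumptions on the fractional delayed system, for every `η > 0`
there exists exactly one continuous `x : [t₀ − g, T] → ℝⁿ` with `x = ν` on `[t₀ − g, t₀]`
satisfying the Volterra integral equation on `[t₀, T]`; moreover this solution satisfies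
`ϖ(x, y₀) ≤ ((a₀+a₁+η)/η) · M [(a₀+a₁)‖ν‖ + a₂ρ] / Γ(β+1)` where `y₀ = ν` on
`[t₀ − g, t₀]` and `y₀ ≡ ν(t₀)` on `[t₀, T]`. -/
theorem exists_unique_solution {n p : ℕ} (β t₀ T g η : ℝ)
    (hβ0 : 0 < β) (hβ1 : β < 1) (hT : t₀ < T) (hg : 0 ≤ g) (hη : 0 < η)
    (gdel : ℝ → ℝ) (hgdel_cont : ContinuousOn gdel (Icc t₀ T))
    (hgdel_mem : ∀ t ∈ Icc t₀ T, gdel t ∈ Icc 0 g)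
    (A₀ A₁ : Euc n →L[ℝ] Euc n) (A₂ : Euc p →L[ℝ] Euc n)
    (κ : ℝ → ℝ) (hκ_cont : Continuous κ) (hκ_nonneg : ∀ s, 0 ≤ κ s)
    (f : ℝ → Euc n → Euc n → Euc p → Euc n)
    (hf_cont : Continuous fun q : ℝ × Euc n × Euc n × Euc p => f q.1 q.2.1 q.2.2.1 q.2.2.2)
    (hf_lip : ∀ (s : ℝ) (u₁ u₂ : Euc n) (u₃ : Euc p) (w₁ w₂ : Euc n) (w₃ : Euc p),
      ‖f s u₁ u₂ u₃ - f s w₁ w₂ w₃‖ ≤ κ s * (‖u₁ - w₁‖ + ‖u₂ - w₂‖ + ‖u₃ - w₃‖))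
    (hf_zero : ∀ s : ℝ, f s 0 0 0 = 0)
    (ρ : ℝ) (hρ : 0 < ρ) (d : ℝ → Euc p) (hd_cont : Continuous d) (hd : ∀ t, ‖d t‖ ≤ ρ)
    (ν : ℝ → Euc n) (hν : ContinuousOn ν (Icc (t₀ - g) t₀))
    (a₀ a₁ a₂ : ℝ)
    (ha₀ : IsGreatest ((fun s => ‖A₀‖ + κ s) '' Icc t₀ T) a₀)
    (ha₁ : IsGreatest ((fun s => ‖A₁‖ + κ s) '' Icc t₀ T) a₁)
    (ha₂ : IsGreatest ((fun s => ‖A₂‖ + κ s) '' Icc t₀ T) a₂)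
    (M : ℝ) (hM : M = sSup ((fun s : ℝ =>
      (s - t₀) ^ β / mittagLeffler β ((a₀ + a₁ + η) * (s - t₀) ^ β)) '' Icc t₀ T))
    (νnorm : ℝ) (hνnorm : νnorm = sSup ((fun s => ‖ν s‖) '' Icc (t₀ - g) t₀)) :
    ∃ x : ℝ → Euc n,
      (ContinuousOn x (Icc (t₀ - g) T) ∧
        (∀ s ∈ Icc (t₀ - g) t₀, x s = ν s) ∧
        (∀ t ∈ Icc t₀ T, x t = ν t₀ + (Real.Gamma β)⁻¹ •
          ∫ s in t₀..t, ((t - s) ^ (β - 1)) •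
            (A₀ (x s) + A₁ (x (s - gdel s)) + A₂ (d s)
              + f s (x s) (x (s - gdel s)) (d s)))) ∧
      genDist β t₀ T g (a₀ + a₁ + η) x (fun t => if t ≤ t₀ then ν t else ν t₀) ≤
        ENNReal.ofReal ((a₀ + a₁ + η) / η * (M * ((a₀ + a₁) * νnorm + a₂ * ρ)
          / Real.Gamma (β + 1))) ∧
      (∀ x' : ℝ → Euc n,
        ContinuousOn x' (Icc (t₀ - g) T) →
        (∀ s ∈ Icc (t₀ - g) t₀, x' s = ν s) →
        (∀ t ∈ Icc t₀ T, x' t = ν t₀ + (Real.Gamma β)⁻¹ •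
          ∫ s in t₀..t, ((t - s) ^ (β - 1)) •
            (A₀ (x' s) + A₁ (x' (s - gdel s)) + A₂ (d s)
              + f s (x' s) (x' (s - gdel s)) (d s))) →
        ∀ t ∈ Icc (t₀ - g) T, x' t = x t) := by
  have ht₀ : t₀ ∈ Icc t₀ T := left_mem_Icc.2 hT.le
  have hk₀ (s) (hs : s ∈ Icc t₀ T) : ‖A₀‖ + κ s ≤ a₀ := ha₀.2 (mem_image_of_mem _ hs)
  have hk₁ (s) (hs : s ∈ Icc t₀ T) : ‖A₁‖ + κ s ≤ a₁ := ha₁.2 (mem_image_of_mem _ hs)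
  have hk₂ (s) (hs : s ∈ Icc t₀ T) : ‖A₂‖ + κ s ≤ a₂ := ha₂.2 (mem_image_of_mem _ hs)
  have ha₀' : 0 ≤ a₀ := (add_nonneg (norm_nonneg _) (hκ_nonneg _)).trans (hk₀ t₀ ht₀)
  have ha₁' : 0 ≤ a₁ := (add_nonneg (norm_nonneg _) (hκ_nonneg _)).trans (hk₁ t₀ ht₀)
  have ha₂' : 0 ≤ a₂ := (add_nonneg (norm_nonneg _) (hκ_nonneg _)).trans (hk₂ t₀ ht₀)
  set θ := a₀ + a₁ + η with hθdef
  have hθ : 0 < θ := by positivity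
  have hw (s) : 1 ≤ weight β t₀ θ s := one_le_weight hβ0 hβ1 t₀ hθ.le s
  have hwpos (s) : 0 < weight β t₀ θ s := zero_lt_one.trans_le (hw s)
  have hsub : Icc t₀ T ⊆ Icc (t₀ - g) T := Icc_subset_Icc_left (by linarith)
  have hdelay (s) (hs : s ∈ Icc t₀ T) : s - gdel s ∈ Icc (t₀ - g) T := by
    have := hgdel_mem s hs
    exact ⟨by linarith [hs.1, this.2], by linarith [hs.2, this.1]⟩
  let R (y : ℝ → Euc n) (s : ℝ) : Euc n :=
    A₀ (y s) + A₁ (y (s - gdel s)) + A₂ (d s) + f s (y s) (y (s - gdel s)) (d s)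
  have hR (y₁ y₂ : ℝ → Euc n) (s) (hs : s ∈ Icc t₀ T) : ‖R y₁ s - R y₂ s‖ ≤
      a₀ * ‖y₁ s - y₂ s‖ + a₁ * ‖y₁ (s - gdel s) - y₂ (s - gdel s)‖ := by
    simpa using norm_affine_sub_le A₀ A₁ A₂ (hk₀ s hs) (hk₁ s hs) (hk₂ s hs)
      (hf_lip s (y₁ s) (y₁ (s - gdel s)) (d s) (y₂ s) (y₂ (s - gdel s)) (d s))
  have hR_norm (y : ℝ → Euc n) (s) (hs : s ∈ Icc t₀ T) :
      ‖R y s‖ ≤ a₀ * ‖y s‖ + a₁ * ‖y (s - gdel s)‖ + a₂ * ‖d s‖ := by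
    simpa [hf_zero] using norm_affine_sub_le A₀ A₁ A₂ (hk₀ s hs) (hk₁ s hs) (hk₂ s hs)
      (hf_lip s (y s) (y (s - gdel s)) (d s) 0 0 0)
  have hR_cont (y : ℝ → Euc n) (hy : ContinuousOn y (Icc (t₀ - g) T)) :
      ContinuousOn (R y) (Icc t₀ T) := by
    have h1 := hy.mono hsub
    have h2 : ContinuousOn (fun s => y (s - gdel s)) (Icc t₀ T) :=
      hy.comp (continuousOn_id.sub hgdel_cont) hdelay
    have h3 : ContinuousOn (fun s => f s (y s) (y (s - gdel s)) (d s)) (Icc t₀ T) :=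
      hf_cont.comp_continuousOn
        (continuousOn_id.prodMk (h1.prodMk (h2.prodMk hd_cont.continuousOn)))
    exact (((A₀.continuous.comp_continuousOn h1).add (A₁.continuous.comp_continuousOn h2)).add
      (A₂.continuous.comp hd_cont).continuousOn).add h3
  obtain ⟨x, hx_cont, hx_fix, hx_est, hx_uniq⟩ :=
    exists_unique_fixedPoint_of_weighted_contraction (a := t₀ - g) (b := T) (L := (a₀ + a₁) / θ)
      (by linarith) (by positivity) ((div_lt_one hθ).2 (by linarith))
      (continuous_weight hβ0 hβ1 t₀ θ) hwpos (fun y => fracVolterra β t₀ ν (R y))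
      (fun y hy => continuousOn_fracVolterra hβ0 hg hT.le hν (hR_cont y hy))
      (fun y₁ y₂ hy₁ hy₂ c hc h t ht => by
        refine (norm_fracVolterra_sub_le_weight hβ0 hβ1 hθ (hR_cont y₁ hy₁) (hR_cont y₂ hy₂)
          (c := (a₀ + a₁) * c) (by positivity) (fun s hs => ?_) ht.2).trans_eq (by ring)
        have h1 := h s (hsub hs)
        have h2 := (h _ (hdelay s hs)).trans (mul_le_mul_of_nonneg_left
          (monotone_weight hβ0 hβ1 t₀ hθ.le (sub_le_self s (hgdel_mem s hs).1)) hc)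
        refine (hR y₁ y₂ s hs).trans ((add_le_add (mul_le_mul_of_nonneg_left h1 ha₀')
          (mul_le_mul_of_nonneg_left h2 ha₁')).trans_eq (by ring)))
  refine ⟨x, ⟨hx_cont, fun s hs => ?_, fun t ht => ?_⟩, ?_, fun x' hx' hν' hV => ?_⟩
  · exact (hx_fix s ⟨hs.1, hs.2.trans hT.le⟩).trans (fracVolterra_of_le hs.2)
  · exact (hx_fix t (hsub ht)).trans (fracVolterra_of_ge ht.1)
  · set y₀ : ℝ → Euc n := fun t => if t ≤ t₀ then ν t else ν t₀
    have hy₀ (t) : y₀ t = ν (min t t₀) := by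
      simp only [y₀]
      split_ifs with h
      · rw [min_eq_left h]
      · rw [min_eq_right (not_le.1 h).le]
    have hmin (t) (ht : t ∈ Icc (t₀ - g) T) : min t t₀ ∈ Icc (t₀ - g) t₀ :=
      ⟨le_min ht.1 (by linarith), min_le_right _ _⟩
    have hy₀_cont : ContinuousOn y₀ (Icc (t₀ - g) T) := by
      rw [funext hy₀]
      exact hν.comp (by fun_prop) hmin
    have hy₀_norm (t) (ht : t ∈ Icc (t₀ - g) T) : ‖y₀ t‖ ≤ νnorm := by
      rw [hy₀, hνnorm]
      exact le_csSup (isCompact_Icc.image_of_continuousOn hν.norm).bddAbove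
        (mem_image_of_mem _ (hmin t ht))
    set B := (a₀ + a₁) * νnorm + a₂ * ρ with hB
    have hνnorm0 : 0 ≤ νnorm := (norm_nonneg _).trans (hy₀_norm t₀ (hsub ht₀))
    have hB0 : 0 ≤ B := by positivity
    have hRB (s) (hs : s ∈ Icc t₀ T) : ‖R y₀ s‖ ≤ B := by
      have h1 := mul_le_mul_of_nonneg_left (hy₀_norm s (hsub hs)) ha₀'
      have h2 := mul_le_mul_of_nonneg_left (hy₀_norm _ (hdelay s hs)) ha₁'
      have h3 := mul_le_mul_of_nonneg_left (hd s) ha₂'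
      linarith [hR_norm y₀ s hs]
    have hM_le (t) (ht : t ∈ Icc t₀ T) : (t - t₀) ^ β ≤ M * weight β t₀ θ t := by
      rw [← div_le_iff₀ (hwpos t), weight_of_le hβ0 θ ht.1, hM]
      refine le_csSup ⟨(T - t₀) ^ β, ?_⟩ (mem_image_of_mem _ ht)
      rintro _ ⟨s, hs, rfl⟩
      simp only
      have hs0 : 0 ≤ s - t₀ := sub_nonneg.2 hs.1
      rw [← weight_of_le hβ0 θ hs.1]
      exact (div_le_self (Real.rpow_nonneg hs0 β) (hw s)).trans
        (Real.rpow_le_rpow hs0 (by linarith [hs.2]) hβ0.le)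
    have hM0 : 0 ≤ M := nonneg_of_mul_nonneg_left
      ((Real.rpow_nonneg (by simp) β).trans (hM_le t₀ ht₀)) (hwpos t₀)
    have hΓ : 0 < Real.Gamma (β + 1) := Real.Gamma_pos_of_pos (by positivity)
    have hest := hx_est y₀ hy₀_cont (M * B / Real.Gamma (β + 1)) (by positivity) fun t ht => by
      rcases le_total t t₀ with h | h
      · rw [fracVolterra_of_le h, hy₀, min_eq_left h, sub_self, norm_zero]
        exact mul_nonneg (by positivity) (hwpos t).le
      · rw [hy₀, min_eq_right h]
        refine (norm_sub_fracVolterra_le hβ0 h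
          fun s hs => hRB s ⟨hs.1, hs.2.trans ht.2⟩).trans ?_
        rw [div_mul_eq_mul_div, mul_right_comm]
        gcongr
        exact hM_le t ⟨h, ht.2⟩
    have hL : 1 - (a₀ + a₁) / θ = η / θ := by
      rw [one_sub_div hθ.ne', hθdef, add_sub_cancel_left]
    refine sInf_le fun t ht => ?_
    rw [← ENNReal.ofReal_mul (by positivity), ← enorm_eq_nnnorm,
      ← ofReal_norm]
    refine ENNReal.ofReal_le_ofReal ((hest t ht).trans_eq ?_)
    rw [hL]
    field_simp
  · refine hx_uniq x' hx' fun t ht => ?_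
    rcases le_total t t₀ with h | h
    · rw [fracVolterra_of_le h, hν' t ⟨ht.1, h⟩]
    · rw [fracVolterra_of_ge h]
      exact hV t ⟨h, ht.2⟩
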